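/- Let (Ω, F, μ) and (Ω̃, F̃, μ̃) be probability spaces carrying measurable A : Ω → ℝ^r, ξ : Ω → ℝ^d and Ã : Ω̃ → ℝ^r, ξ̃ : Ω̃ → ℝ^d, with ξ integrable, ∫ ξ dμ = 0, ξ independent of A, and likewise ξ̃ integrable, ∫ ξ̃ dμ̃ = 0, ξ̃ independent of Ã. Let g, g̃ : ℝ^r → ℝ^d be measurable with g∘A and g̃∘Ã integrable, and set X := g∘A + ξ and X̃ := g̃∘Ã + ξ̃. If the joint law of (X, A) under μ equals the joint law of (X̃, Ã) under μ̃, then g = g̃ almost everywhere with respect to the law of A, and consequently the joint law of (A, X − g∘A) under μ equals the joint law of (Ã, X̃ − g̃∘Ã) under μ̃. -/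

import Mathlib

open MeasureTheory ProbabilityTheory

/-!
Conditionally on `A = a`, the variable `X = g ∘ A + ξ` is the conditional noise translated by the
constant `g a`. Centred noise therefore makes `g a` the mean of the conditional law of `X` given
`A = a`, and that conditional law depends only on the joint law of `(X, A)`.
-/

section Kernel

variable {α β γ : Type*} {mα : MeasurableSpace α} {mβ : MeasurableSpace β}
  {mγ : MeasurableSpace γ} {f : α × β → γ}

lemma map_id_prod_apply (κ : Kernel α β) [IsSFiniteKernel κ] (hf : Measurable f) (a : α) :
    (Kernel.id ×ₖ κ).map f a = (κ a).map fun y => f (a, y) := by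
  rw [Kernel.map_apply _ hf, Kernel.prod_apply, Kernel.id_apply, Measure.dirac_prod,
    Measure.map_map hf measurable_prodMk_left]
  rfl

lemma map_prodMk_fst_compProd (μ : Measure α) [SFinite μ] (κ : Kernel α β) [IsSFiniteKernel κ]
    (hf : Measurable f) :
    (μ ⊗ₘ κ).map (fun p => (p.1, f p)) = μ ⊗ₘ (Kernel.id ×ₖ κ).map f := by
  have hgraph : Measurable fun p : α × β => (p.1, f p) := by fun_prop
  ext s hs
  rw [Measure.map_apply hgraph hs, Measure.compProd_apply (hgraph hs), Measure.compProd_apply hs]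
  refine lintegral_congr fun a => ?_
  rw [map_id_prod_apply κ hf, Measure.map_apply (by fun_prop) (measurable_prodMk_left hs)]
  rfl

end Kernel

section CondDistrib

variable {Ω α E F : Type*} {mΩ : MeasurableSpace Ω} {mα : MeasurableSpace α}
  {mE : MeasurableSpace E} [StandardBorelSpace E] [Nonempty E]
  {μ : Measure Ω} [IsFiniteMeasure μ] {A : Ω → α}

lemma condDistrib_eq_of_identDistrib_prodMk {Ω' : Type*} {mΩ' : MeasurableSpace Ω'}
    {μ' : Measure Ω'} [IsFiniteMeasure μ'] {A' : Ω' → α} {X : Ω → E} {X' : Ω' → E}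
    (h : IdentDistrib (fun ω => (A ω, X ω)) (fun ω => (A' ω, X' ω)) μ μ') :
    condDistrib X A μ = condDistrib X' A' μ' := by
  simp only [condDistrib, h.map_eq]

lemma condDistrib_comp_prodMk_ae_eq {mF : MeasurableSpace F} [StandardBorelSpace F] [Nonempty F]
    {Y : Ω → E} (hA : AEMeasurable A μ) (hY : AEMeasurable Y μ)
    {f : α × E → F} (hf : Measurable f) :
    ∀ᵐ a ∂μ.map A, condDistrib (fun ω => f (A ω, Y ω)) A μ a
      = (condDistrib Y A μ a).map fun y => f (a, y) := by
  have hjoint : μ.map (fun ω => (A ω, f (A ω, Y ω)))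
      = μ.map A ⊗ₘ (Kernel.id ×ₖ condDistrib Y A μ).map f := by
    rw [← map_prodMk_fst_compProd _ _ hf, compProd_map_condDistrib hY,
      AEMeasurable.map_map_of_aemeasurable (by fun_prop) (hA.prodMk hY)]
    rfl
  filter_upwards [condDistrib_ae_eq_of_measure_eq_compProd A (by fun_prop) hjoint] with a ha
  rw [ha, map_id_prod_apply _ hf]

end CondDistrib

section CondMean

variable {Ω α E : Type*} {mΩ : MeasurableSpace Ω} {mα : MeasurableSpace α}
  [NormedAddCommGroup E] [NormedSpace ℝ E] [CompleteSpace E] [SecondCountableTopology E]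
  [MeasurableSpace E] [BorelSpace E] {μ : Measure Ω} [IsFiniteMeasure μ]
  {A : Ω → α}

lemma condExp_comap_ae_eq_integral_of_indepFun {Y : Ω → E} (hA : Measurable A)
    (hY : Measurable Y) (hindep : IndepFun Y A μ) : μ[Y | mα.comap A] =ᵐ[μ] fun _ => ∫ ω, Y ω ∂μ :=
  condExp_indep_eq hY.comap_le hA.comap_le (comap_measurable Y).stronglyMeasurable hindep

lemma integral_condDistrib_ae_eq_of_condExp_ae_eq {Y : Ω → E} {h : α → E} (hA : Measurable A)
    (hY : Integrable Y μ) (hh : Measurable h) (hYh : μ[Y | mα.comap A] =ᵐ[μ] h ∘ A) :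
    ∀ᵐ a ∂μ.map A, ∫ y, y ∂condDistrib Y A μ a = h a := by
  have hmean : Measurable fun a => ∫ y, y ∂condDistrib Y A μ a :=
    measurable_snd.stronglyMeasurable.integral_condDistrib.measurable
  rw [ae_map_iff hA.aemeasurable (measurableSet_eq_fun hmean hh)]
  exact (condExp_ae_eq_integral_condDistrib' hA hY).symm.trans hYh

lemma integral_condDistrib_comp_add_ae_eq {ξ : Ω → E} {g : α → E} (hA : Measurable A)
    (hξ : Integrable ξ μ) (hξ0 : μ[ξ | mα.comap A] =ᵐ[μ] 0) (hg : Measurable g) :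
    ∀ᵐ a ∂μ.map A, ∫ x, x ∂condDistrib (fun ω => g (A ω) + ξ ω) A μ a = g a := by
  have hξm : AEMeasurable ξ μ := hξ.aemeasurable
  have hadd : Measurable fun p : α × E => g p.1 + p.2 := by fun_prop
  have hint : ∀ᵐ a ∂μ.map A, Integrable (fun y => y) (condDistrib ξ A μ a) :=
    Integrable.condDistrib_ae_map (f := Prod.snd) hξm <|
      (integrable_map_measure measurable_snd.aestronglyMeasurable
        (hA.aemeasurable.prodMk hξm)).2 hξ
  filter_upwards [condDistrib_comp_prodMk_ae_eq hA.aemeasurable hξm hadd, hint,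
    integral_condDistrib_ae_eq_of_condExp_ae_eq hA hξ measurable_zero hξ0] with a hlaw hint hmean
  calc ∫ x, x ∂condDistrib (fun ω => g (A ω) + ξ ω) A μ a
      = ∫ y, g a + y ∂condDistrib ξ A μ a := by
        rw [hlaw, integral_map (by fun_prop) measurable_id'.aestronglyMeasurable]
    _ = g a + ∫ y, y ∂condDistrib ξ A μ a := by
        rw [integral_add (integrable_const _) hint, integral_const, probReal_univ, one_smul]
    _ = g a := by rw [hmean, Pi.zero_apply, add_zero]

end CondMean

section Identification

variable {Ω Ω' α E : Type*} {mΩ : MeasurableSpace Ω} {mΩ' : MeasurableSpace Ω'}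
  {mα : MeasurableSpace α} [MeasurableSpace E]
  {μ : Measure Ω} {μ' : Measure Ω'} {A : Ω → α} {A' : Ω' → α} {ξ : Ω → E} {ξ' : Ω' → E}
  {g g' : α → E}

lemma identDistrib_prodMk_noise_of_ae_eq [AddCommGroup E] [MeasurableSub₂ E]
    (hg' : Measurable g') (hgg' : g =ᵐ[μ.map A] g')
    (hlaw : IdentDistrib (fun ω => (g (A ω) + ξ ω, A ω)) (fun ω => (g' (A' ω) + ξ' ω, A' ω)) μ μ') :
    IdentDistrib (fun ω => (A ω, ξ ω)) (fun ω => (A' ω, ξ' ω)) μ μ' := by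
  have hresidual : IdentDistrib (fun ω => (A ω, g (A ω) + ξ ω - g' (A ω)))
      (fun ω => (A' ω, ξ' ω)) μ μ' := by
    have hmeas : Measurable fun p : E × α => (p.2, p.1 - g' p.2) := by fun_prop
    simpa only [Function.comp_def, add_sub_cancel_left] using hlaw.comp hmeas
  have hnoise : (fun ω => (A ω, g (A ω) + ξ ω - g' (A ω))) =ᵐ[μ] fun ω => (A ω, ξ ω) := by
    filter_upwards [ae_of_ae_map hlaw.aemeasurable_fst.snd hgg'] with ω hω
    rw [hω, add_sub_cancel_left]
  exact (IdentDistrib.of_ae_eq hresidual.aemeasurable_fst hnoise).symm.trans hresidual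

theorem exogenous_decomposition_identification_general
    [NormedAddCommGroup E] [NormedSpace ℝ E] [CompleteSpace E] [SecondCountableTopology E]
    [BorelSpace E] [IsFiniteMeasure μ] [IsFiniteMeasure μ']
    (hA : Measurable A) (hA' : Measurable A') (hξ : Integrable ξ μ) (hξ' : Integrable ξ' μ')
    (hξ0 : μ[ξ | mα.comap A] =ᵐ[μ] 0) (hξ0' : μ'[ξ' | mα.comap A'] =ᵐ[μ'] 0)
    (hg : Measurable g) (hg' : Measurable g')
    (hlaw : IdentDistrib (fun ω => (g (A ω) + ξ ω, A ω)) (fun ω => (g' (A' ω) + ξ' ω, A' ω)) μ μ') :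
    g =ᵐ[μ.map A] g' ∧ IdentDistrib (fun ω => (A ω, ξ ω)) (fun ω => (A' ω, ξ' ω)) μ μ' := by
  have hAA' : μ.map A = μ'.map A' := (hlaw.comp measurable_snd).map_eq
  have hcond : condDistrib (fun ω => g (A ω) + ξ ω) A μ
      = condDistrib (fun ω => g' (A' ω) + ξ' ω) A' μ' :=
    condDistrib_eq_of_identDistrib_prodMk (hlaw.comp measurable_swap)
  have hmean' := integral_condDistrib_comp_add_ae_eq hA' hξ' hξ0' hg'
  rw [← hAA', ← hcond] at hmean'
  have hgg' : g =ᵐ[μ.map A] g' := by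
    filter_upwards [integral_condDistrib_comp_add_ae_eq hA hξ hξ0 hg, hmean'] with a ha ha'
    exact ha.symm.trans ha'
  exact ⟨hgg', identDistrib_prodMk_noise_of_ae_eq hg' hgg' hlaw⟩

end Identification

/-- Step (i) of Proposition genX_intra: two models `X = g ∘ A + ξ` and `X' = g' ∘ A' + ξ'`
with exogenous `A` independent of the mean-zero noise, inducing the same joint law of
`(X, A)`, must have `g = g'` almost everywhere w.r.t. the law of `A`, and hence the same
joint law of `(A, X - g ∘ A)`. -/
theorem exogenous_decomposition_identification
    {Ω Ω' : Type*} [MeasurableSpace Ω] [MeasurableSpace Ω']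
    (μ : Measure Ω) (μ' : Measure Ω')
    [IsProbabilityMeasure μ] [IsProbabilityMeasure μ']
    {r d : ℕ}
    (A : Ω → Fin r → ℝ) (ξ : Ω → Fin d → ℝ)
    (A' : Ω' → Fin r → ℝ) (ξ' : Ω' → Fin d → ℝ)
    (hA : Measurable A) (hξ : Measurable ξ)
    (hA' : Measurable A') (hξ' : Measurable ξ')
    (hξ1 : Integrable ξ μ) (hξ0 : ∫ ω, ξ ω ∂μ = 0) (hindep : IndepFun ξ A μ)
    (hξ1' : Integrable ξ' μ') (hξ0' : ∫ ω, ξ' ω ∂μ' = 0) (hindep' : IndepFun ξ' A' μ')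
    (g g' : (Fin r → ℝ) → Fin d → ℝ) (hg : Measurable g) (hg' : Measurable g')
    (hgA : Integrable (fun ω => g (A ω)) μ)
    (hgA' : Integrable (fun ω => g' (A' ω)) μ')
    (hlaw : Measure.map (fun ω => (g (A ω) + ξ ω, A ω)) μ
          = Measure.map (fun ω => (g' (A' ω) + ξ' ω, A' ω)) μ') :
    g =ᵐ[Measure.map A μ] g' ∧
    Measure.map (fun ω => (A ω, (g (A ω) + ξ ω) - g (A ω))) μ
      = Measure.map (fun ω => (A' ω, (g' (A' ω) + ξ' ω) - g' (A' ω))) μ' := by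
  obtain ⟨hgg', hnoise⟩ := exogenous_decomposition_identification_general hA hA' hξ1 hξ1'
    ((condExp_comap_ae_eq_integral_of_indepFun hA hξ hindep).trans
      (.of_eq (funext fun _ => hξ0)))
    ((condExp_comap_ae_eq_integral_of_indepFun hA' hξ' hindep').trans
      (.of_eq (funext fun _ => hξ0')))
    hg hg' ⟨by fun_prop, by fun_prop, hlaw⟩
  exact ⟨hgg', by simpa only [add_sub_cancel_left] using hnoise.map_eq⟩
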